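/- Let U, B, B' be natural numbers, let A be a U × B' matrix over ℂ, and let e : Fin B → Fin B' be an injective map. Let A_e denote the U × B submatrix of A formed by the columns of A indexed by e. Then the real part of det(A_e · A_eᴴ) is at most the real part of det(A · Aᴴ), where (·)ᴴ denotes the conjugate transpose. (Both determinants are real and nonnegative, since A_e·A_eᴴ and A·Aᴴ are positive semidefinite.) -/

import Mathlib

open Matrix

theorem mul_eq_sum_vecMulVec {m n p R : Type*} [Fintype n] [NonUnitalNonAssocSemiring R]
    (A : Matrix m n R) (B : Matrix n p R) : A * B = ∑ j, vecMulVec (A.col j) (B.row j) := by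
  ext i k
  simp only [mul_apply, Matrix.sum_apply, vecMulVec_apply, col_apply, row_apply]

section GramDeterminant

open scoped ComplexOrder MatrixOrder

variable {𝕜 m n p : Type*} [RCLike 𝕜] [Fintype n] [Fintype p]

theorem submatrix_mul_conjTranspose_le [Finite m] (A : Matrix m n 𝕜) {e : p → n}
    (he : Function.Injective e) :
    A.submatrix id e * (A.submatrix id e)ᴴ ≤ A * Aᴴ := by
  rw [mul_eq_sum_vecMulVec, mul_eq_sum_vecMulVec A]
  calc ∑ k, vecMulVec (A.col (e k)) (star (A.col (e k)))
      = ∑ j ∈ Finset.univ.map ⟨e, he⟩, vecMulVec (A.col j) (star (A.col j)) := by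
        rw [Finset.sum_map, Function.Embedding.coeFn_mk]
    _ ≤ ∑ j, vecMulVec (A.col j) (star (A.col j)) :=
        Finset.sum_le_univ_sum_of_nonneg fun j ↦ (posSemidef_vecMulVec_self_star _).nonneg

variable [Fintype m] [DecidableEq m]

theorem one_le_det_of_one_le {M : Matrix m m 𝕜} (hM : 1 ≤ M) : 1 ≤ M.det := by
  have hHerm : M.IsHermitian := (zero_le_one.trans hM).posSemidef.isHermitian
  have one_le_eigenvalues (i : m) : 1 ≤ hHerm.eigenvalues i :=
    (CFC.one_le_iff (R := ℝ) M hHerm.isSelfAdjoint).mp hM _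
      (hHerm.eigenvalues_mem_spectrum_real i)
  rw [hHerm.det_eq_prod_eigenvalues]
  exact_mod_cast Finset.one_le_prod fun i _ ↦ one_le_eigenvalues i

theorem det_le_det_of_nonneg_of_le {P Q : Matrix m m 𝕜} (hP : 0 ≤ P) (hPQ : P ≤ Q) :
    P.det ≤ Q.det := by
  by_cases hdet : P.det = 0
  · rw [hdet]
    exact (hP.trans hPQ).posSemidef.det_nonneg
  -- Conjugating by the inverse of a factor `S` in `P = star S * S` reduces to the case `P = 1`.
  obtain ⟨S, rfl⟩ := CStarAlgebra.nonneg_iff_eq_star_mul_self.mp hP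
  have hS : IsUnit S.det := (right_ne_zero_of_mul (det_mul (star S) S ▸ hdet)).isUnit
  have star_inv_mul_star : star S⁻¹ * star S = 1 := by
    rw [← star_mul, mul_nonsing_inv S hS, star_one]
  have one_le : 1 ≤ star S⁻¹ * Q * S⁻¹ := by
    simpa only [← mul_assoc, star_inv_mul_star, one_mul, mul_nonsing_inv S hS] using
      star_left_conjugate_le_conjugate hPQ S⁻¹
  calc (star S * S).det ≤ (star S * S).det * (star S⁻¹ * Q * S⁻¹).det :=
        le_mul_of_one_le_right hP.posSemidef.det_nonneg (one_le_det_of_one_le one_le)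
    _ = (star S⁻¹ * star S).det * Q.det * (S * S⁻¹).det := by
        simp only [det_mul]; ring
    _ = Q.det := by
        rw [star_inv_mul_star, mul_nonsing_inv S hS, det_one, one_mul, mul_one]

theorem stmt_2_general (A : Matrix m n 𝕜) {e : p → n} (he : Function.Injective e) :
    (A.submatrix id e * (A.submatrix id e)ᴴ).det ≤ (A * Aᴴ).det :=
  det_le_det_of_nonneg_of_le (posSemidef_self_mul_conjTranspose _).nonneg
    (submatrix_mul_conjTranspose_le A he)

end GramDeterminant

/-- Paper Lemma 2 (matrix form): the Gram determinant of the rows of a complex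
matrix is non-decreasing in the set of selected columns. -/
theorem stmt_2 (U B B' : ℕ) (A : Matrix (Fin U) (Fin B') ℂ)
    (e : Fin B → Fin B') (he : Function.Injective e) :
    ((A.submatrix id e) * (A.submatrix id e)ᴴ).det.re ≤ (A * Aᴴ).det.re :=
  open scoped ComplexOrder in (Complex.le_def.mp (stmt_2_general A he)).1
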